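/- Let s > 7 be a square-free integer with s ≢ 1 (mod 4) and 5 ∤ s, and let K = ℚ(√5, √s). Then the element α = 1² + ((1+√5)/2)² + ((1+√5)/2)² + (⌊√s⌋ + √s)² + (⌈√s⌉ + √s)² of O_K has length exactly 5 (it is a sum of 5 squares in O_K but not of 4); in particular the Pythagoras number of O_K is at least 5. -/

import Mathlib

/-!
Write `φ = (1 + √5)/2`, `n = ⌊√s⌋` and `k = 2n + 1`. Since `s ≡ 2, 3 (mod 4)` and `5 ∤ s`, the ring of
integers of `ℚ(√5, √s)` is `ℤ[φ] ⊕ ℤ[φ]√s` (`mem_ringOfInt`): all four Galois conjugates of an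
integral element are integral (`isIntegral_conj`), and relative traces and norms over `ℚ(√5)` and
`ℚ` bound the denominators.

Suppose `α = ∑ (aᵢ + bᵢ√s)²` with four terms and `aᵢ, bᵢ ∈ ℤ[φ]`. Comparing coordinates,
`∑ aᵢ² + s ∑ bᵢ² = 3 + 2φ + n² + (n+1)² + 2s` and `∑ aᵢbᵢ = k`. With `β = ∑ bᵢ²`, the
Cauchy–Schwarz inequality `k² ≤ (∑ aᵢ²) β` holds in both real embeddings of `ℤ[φ]`
(`cauchy_embedding`). The sum of these two inequalities forces `β ∈ ℤ`, and the embedding with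
`φ ↦ φ' < 0` then forces `β = 2`, because `s ≥ 11` (`sum_b_sq_eq_two`).

A sum of squares in `ℤ[φ]` equal to `2` is `(±1)² + (±1)²`. After a permutation and sign changes,
`a₁ + a₂ = k`, and `u = a₁ - a₂`, `v = a₃ + a₄`, `w = a₃ - a₄` are all `≡ 1 (mod 2)` and satisfy
`u² + v² + w² = 7 + 4φ` (`no_two_units`). Such `u, v, w` do not exist (`no_three_odd_squares`).
-/

/-- The totally real biquadratic field `ℚ(√p, √q)` as a subfield of `ℝ`. -/
noncomputable def biqField (p q : ℕ) : IntermediateField ℚ ℝ :=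
  IntermediateField.adjoin ℚ {Real.sqrt p, Real.sqrt q}

/-- The ring of integers of a subfield `K` of `ℝ`, viewed as the set of elements
of `K` that are integral over `ℤ`. -/
def ringOfInt (K : IntermediateField ℚ ℝ) : Set ℝ :=
  {x : ℝ | x ∈ K ∧ IsIntegral ℤ x}

/-- `α` is a sum of `n` squares of elements of `S`. -/
def SumOfNSquaresIn (S : Set ℝ) (n : ℕ) (α : ℝ) : Prop :=
  ∃ x : Fin n → ℝ, (∀ i, x i ∈ S) ∧ α = ∑ i, x i ^ 2

/-- `α` is a sum of squares of elements of `S`. -/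
def IsSumOfSquaresIn (S : Set ℝ) (α : ℝ) : Prop := ∃ n, SumOfNSquaresIn S n α

/-- `K` is a totally real biquadratic field. -/
def IsBiquadratic (K : IntermediateField ℚ ℝ) : Prop :=
  ∃ p q : ℕ, Squarefree p ∧ Squarefree q ∧ 1 < p ∧ 1 < q ∧ p ≠ q ∧ K = biqField p q

/-! ### Arithmetic in coordinates -/

/-- There is no solution of `u² + v² + w² = 7 + 4φ` in `ℤ[φ]` with `u, v, w ≡ 1 (mod 2)`. -/
lemma no_three_odd_squares (P₁ P₂ P₃ Q₁ Q₂ Q₃ : ℤ)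
    (hP₁ : P₁ % 2 = 1) (hP₂ : P₂ % 2 = 1) (hP₃ : P₃ % 2 = 1)
    (hQ₁ : Q₁ % 2 = 0) (hQ₂ : Q₂ % 2 = 0) (hQ₃ : Q₃ % 2 = 0)
    (h0 : P₁ ^ 2 + Q₁ ^ 2 + (P₂ ^ 2 + Q₂ ^ 2) + (P₃ ^ 2 + Q₃ ^ 2) = 7)
    (h1 : 2 * P₁ * Q₁ + Q₁ ^ 2 + (2 * P₂ * Q₂ + Q₂ ^ 2) + (2 * P₃ * Q₃ + Q₃ ^ 2) = 4) :
    False := by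
  have hb : ∀ x : ℤ, x ^ 2 ≤ 7 → -2 ≤ x ∧ x ≤ 2 := fun x hx =>
    ⟨by nlinarith, by nlinarith⟩
  obtain ⟨l1, u1⟩ := hb P₁
    (by linarith [sq_nonneg P₂, sq_nonneg P₃, sq_nonneg Q₁, sq_nonneg Q₂, sq_nonneg Q₃])
  obtain ⟨l2, u2⟩ := hb P₂
    (by linarith [sq_nonneg P₁, sq_nonneg P₃, sq_nonneg Q₁, sq_nonneg Q₂, sq_nonneg Q₃])
  obtain ⟨l3, u3⟩ := hb P₃
    (by linarith [sq_nonneg P₁, sq_nonneg P₂, sq_nonneg Q₁, sq_nonneg Q₂, sq_nonneg Q₃])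
  obtain ⟨l4, u4⟩ := hb Q₁
    (by linarith [sq_nonneg P₁, sq_nonneg P₂, sq_nonneg P₃, sq_nonneg Q₂, sq_nonneg Q₃])
  obtain ⟨l5, u5⟩ := hb Q₂
    (by linarith [sq_nonneg P₁, sq_nonneg P₂, sq_nonneg P₃, sq_nonneg Q₁, sq_nonneg Q₃])
  obtain ⟨l6, u6⟩ := hb Q₃
    (by linarith [sq_nonneg P₁, sq_nonneg P₂, sq_nonneg P₃, sq_nonneg Q₁, sq_nonneg Q₂])
  have e : ∀ x : ℤ, -2 ≤ x → x ≤ 2 → x % 2 = 1 → x = 1 ∨ x = -1 := by intros; omega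
  have f : ∀ x : ℤ, -2 ≤ x → x ≤ 2 → x % 2 = 0 → x = 0 ∨ x = 2 ∨ x = -2 := by intros; omega
  rcases e _ l1 u1 hP₁ with rfl | rfl <;> rcases e _ l2 u2 hP₂ with rfl | rfl <;>
    rcases e _ l3 u3 hP₃ with rfl | rfl <;> rcases f _ l4 u4 hQ₁ with rfl | rfl | rfl <;>
    rcases f _ l5 u5 hQ₂ with rfl | rfl | rfl <;> rcases f _ l6 u6 hQ₃ with rfl | rfl | rfl <;>
    omega

/-- The case `b = (±1, ±1, 0, 0)`: with `aᵢ = pᵢ + qᵢφ`, the elements `e₁a₁ - e₂a₂`, `a₃ + a₄`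
and `a₃ - a₄` would contradict `no_three_odd_squares`. -/
lemma no_two_units (n e₁ e₂ p₁ p₂ p₃ p₄ q₁ q₂ q₃ q₄ : ℤ) (he₁ : e₁ ^ 2 = 1) (he₂ : e₂ ^ 2 = 1)
    (h0 : p₁ ^ 2 + q₁ ^ 2 + (p₂ ^ 2 + q₂ ^ 2) + (p₃ ^ 2 + q₃ ^ 2) + (p₄ ^ 2 + q₄ ^ 2)
      = 3 + n ^ 2 + (n + 1) ^ 2)
    (h1 : 2 * p₁ * q₁ + q₁ ^ 2 + (2 * p₂ * q₂ + q₂ ^ 2) + (2 * p₃ * q₃ + q₃ ^ 2)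
      + (2 * p₄ * q₄ + q₄ ^ 2) = 2)
    (h2 : e₁ * p₁ + e₂ * p₂ = 2 * n + 1) (h3 : e₁ * q₁ + e₂ * q₂ = 0) : False := by
  have par : ∀ x : ℤ, x ^ 2 % 2 = x % 2 := by
    intro x
    rcases Int.emod_two_eq_zero_or_one x with h | h <;> simp [pow_two, Int.mul_emod, h]
  have s1 : (e₁ * p₁) ^ 2 = p₁ ^ 2 := by rw [mul_pow, he₁, one_mul]
  have s2 : (e₂ * p₂) ^ 2 = p₂ ^ 2 := by rw [mul_pow, he₂, one_mul]
  have s3 : (e₁ * q₁) ^ 2 = q₁ ^ 2 := by rw [mul_pow, he₁, one_mul]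
  have s4 : (e₂ * q₂) ^ 2 = q₂ ^ 2 := by rw [mul_pow, he₂, one_mul]
  have s5 : (e₁ * p₁) * (e₁ * q₁) = p₁ * q₁ := by linear_combination p₁ * q₁ * he₁
  have s6 : (e₂ * p₂) * (e₂ * q₂) = p₂ * q₂ := by linear_combination p₂ * q₂ * he₂
  generalize e₁ * p₁ = a at *
  generalize e₂ * p₂ = b at *
  generalize e₁ * q₁ = c at *
  generalize e₂ * q₂ = d at *
  have := par a; have := par b; have := par c; have := par d
  have := par p₃; have := par p₄; have := par q₃; have := par q₄
  have := par n; have := par (n + 1)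
  have hq : (q₃ + q₄) % 2 = 0 := by
    have : (q₃ ^ 2 + q₄ ^ 2 + c ^ 2 + d ^ 2) = 2 * (1 - p₁ * q₁ - p₂ * q₂ - p₃ * q₃ - p₄ * q₄) := by
      linear_combination h1 + s3 + s4
    omega
  have hp : (p₃ + p₄) % 2 = 1 := by omega
  refine no_three_odd_squares (a - b) (p₃ + p₄) (p₃ - p₄) (c - d) (q₃ + q₄) (q₃ - q₄)
    (by omega) hp (by omega) (by omega) hq (by omega) ?_ ?_
  · have ha : a = 2 * n + 1 - b := by linarith
    have hc : c = -d := by linarith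
    subst ha hc
    linear_combination 2 * h0 + 2 * s1 + 2 * s2 + 2 * s3 + 2 * s4
  · have ha : a = 2 * n + 1 - b := by linarith
    have hc : c = -d := by linarith
    subst ha hc
    linear_combination 2 * h1 + 2 * s3 + 2 * s4 + 4 * s5 + 4 * s6

/-- Cauchy–Schwarz for the real vectors `aᵢ = a₀ᵢ + a₁ᵢt` and `bᵢ = b₀ᵢ + b₁ᵢt`, where `t` is a root
of `t² = t + 1`, together with `∑ aᵢ² = A - s ∑ bᵢ²` and `∑ aᵢbᵢ = k`. -/
lemma cauchy_embedding (t : ℝ) (ht : t ^ 2 = t + 1) (s n u v : ℤ) (a₀ a₁ b₀ b₁ : Fin 4 → ℤ)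
    (hu : ∑ i, (b₀ i ^ 2 + b₁ i ^ 2) = u) (hv : ∑ i, (2 * b₀ i * b₁ i + b₁ i ^ 2) = v)
    (h0 : ∑ i, (a₀ i ^ 2 + a₁ i ^ 2) + s * u = 3 + n ^ 2 + (n + 1) ^ 2 + 2 * s)
    (h1 : ∑ i, (2 * a₀ i * a₁ i + a₁ i ^ 2) + s * v = 2)
    (h2 : ∑ i, (a₀ i * b₀ i + a₁ i * b₁ i) = 2 * n + 1)
    (h3 : ∑ i, (a₀ i * b₁ i + a₁ i * b₀ i + a₁ i * b₁ i) = 0) :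
    (2 * n + 1 : ℝ) ^ 2 ≤
      ((3 + n ^ 2 + (n + 1) ^ 2 + 2 * s - s * u) + (2 - s * v) * t) * (u + v * t) := by
  have key := Finset.sum_mul_sq_le_sq_mul_sq Finset.univ
    (fun i => (a₀ i : ℝ) + a₁ i * t) (fun i => (b₀ i : ℝ) + b₁ i * t)
  have g0 := congrArg (Int.cast : ℤ → ℝ) h0
  have g1 := congrArg (Int.cast : ℤ → ℝ) h1
  have g2 := congrArg (Int.cast : ℤ → ℝ) h2
  have g3 := congrArg (Int.cast : ℤ → ℝ) h3
  have gu := congrArg (Int.cast : ℤ → ℝ) hu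
  have gv := congrArg (Int.cast : ℤ → ℝ) hv
  simp only [Fin.sum_univ_four] at *
  push_cast at *
  refine le_of_eq_of_le ?_ (key.trans_eq ?_)
  · refine congrArg (· ^ 2) ?_
    linear_combination -g2 - t * g3 - (a₁ 0 * b₁ 0 + a₁ 1 * b₁ 1 + a₁ 2 * b₁ 2 + a₁ 3 * b₁ 3) * ht
  · refine congrArg₂ (· * ·) ?_ ?_
    · linear_combination g0 + t * g1 + (a₁ 0 ^ 2 + a₁ 1 ^ 2 + a₁ 2 ^ 2 + a₁ 3 ^ 2) * ht
    · linear_combination gu + t * gv + (b₁ 0 ^ 2 + b₁ 1 ^ 2 + b₁ 2 ^ 2 + b₁ 3 ^ 2) * ht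

/-- The Cauchy–Schwarz inequalities in both embeddings of `ℤ[φ]` force `∑ bᵢ² = u + vφ = 2`. -/
lemma sum_b_sq_eq_two (s n u v : ℤ) (hs : 11 ≤ s) (hn : n ^ 2 < s) (hn' : s < (n + 1) ^ 2)
    (hn0 : 0 ≤ n)
    (H : ∀ t : ℝ, t ^ 2 = t + 1 → (2 * n + 1 : ℝ) ^ 2 ≤
      ((3 + n ^ 2 + (n + 1) ^ 2 + 2 * s - s * u) + (2 - s * v) * t) * (u + v * t)) 
    (hu0 : 0 ≤ u) : u = 2 ∧ v = 0 := by
  have hn3 : 3 ≤ n := by nlinarith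
  have H1 := H _ Real.goldenRatio_sq
  have H2 := H _ Real.goldenConj_sq
  -- the trace to `ℤ` of the two inequalities
  have tr : 2 * (2 * n + 1) ^ 2 ≤ 2 * (3 + n ^ 2 + (n + 1) ^ 2 + 2 * s - s * u) * u
      + ((3 + n ^ 2 + (n + 1) ^ 2 + 2 * s - s * u) * v + (2 - s * v) * u)
      + 3 * ((2 - s * v) * v) := by
    have h5 : (2 : ℝ) * (2 * n + 1) ^ 2 ≤ 2 * (3 + n ^ 2 + (n + 1) ^ 2 + 2 * s - s * u) * u
      + ((3 + n ^ 2 + (n + 1) ^ 2 + 2 * s - s * u) * v + (2 - s * v) * u)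
      + 3 * ((2 - s * v) * v) := by
      have e1 := Real.goldenRatio_add_goldenConj
      have e2 := Real.goldenRatio_sq
      have e3 := Real.goldenConj_sq
      generalize Real.goldenRatio = f at *
      generalize Real.goldenConj = g at *
      have : g = 1 - f := by linarith
      subst this
      linear_combination H1 + H2 + 2 * (2 - s * v) * v * e2
    exact_mod_cast h5
  obtain ⟨r, rfl⟩ : ∃ r, s = n ^ 2 + r := ⟨s - n ^ 2, by ring⟩
  have hr1 : 1 ≤ r := by linarith
  have hr2 : r ≤ 2 * n := by nlinarith
  have hv : v = 0 := by
    by_contra hv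
    set s := n ^ 2 + r with hsdef
    -- `x = Tr (β - 2)` for `β = u + vφ`; completing the square in `x` shows `|v| < 1`
    obtain ⟨x, hx⟩ : ∃ x, x = 2 * (u - 2) + v := ⟨_, rfl⟩
    have q1 : s * (x ^ 2 + 5 * v ^ 2) + (4 * r - 4 * n - 10) * x ≤ 36 + 10 * v := by
      rw [hx, hsdef]; rw [hsdef] at tr; nlinarith [tr]
    have q2 : (2 * s * x + (4 * r - 4 * n - 10)) ^ 2 + 20 * s ^ 2 * v ^ 2
        ≤ (4 * r - 4 * n - 10) ^ 2 + 144 * s + 40 * s * v := by nlinarith [q1]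
    have q3 : (4 * r - 4 * n - 10) ^ 2 ≤ (4 * n + 6) ^ 2 := by
      apply sq_le_sq'
      · linarith
      · linarith
    have q4 : (4 * n + 6) ^ 2 ≤ 36 * n ^ 2 := by nlinarith
    have q5 : 1 ≤ v ^ 2 := by
      have := sq_nonneg v
      have : v ^ 2 ≠ 0 := pow_ne_zero 2 hv
      omega
    have q6 : v ≤ v ^ 2 := by nlinarith [Int.le_self_sq v]
    have q7 : s * v ≤ s * v ^ 2 := by nlinarith
    have q8 : (20 * s ^ 2 - 40 * s) * 1 ≤ (20 * s ^ 2 - 40 * s) * v ^ 2 :=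
      mul_le_mul_of_nonneg_left q5 (by nlinarith)
    nlinarith [sq_nonneg (2 * s * x + (4 * r - 4 * n - 10))]
  subst hv
  refine ⟨?_, rfl⟩
  -- the second embedding, using `φ' < -3/5`
  have cj : 5 * (2 * n + 1) ^ 2 ≤
      (5 * (3 + n ^ 2 + (n + 1) ^ 2 + 2 * (n ^ 2 + r) - (n ^ 2 + r) * u) - 6) * u := by
    have hψ : Real.goldenConj ≤ -3 / 5 := by
      have h5 : (11 / 5 : ℝ) ≤ Real.sqrt 5 := Real.le_sqrt_of_sq_le (by norm_num)
      unfold Real.goldenConj; linarith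
    have hu : (0 : ℝ) ≤ u := by exact_mod_cast hu0
    have := mul_le_mul_of_nonneg_right hψ hu
    have h6 : (5 : ℝ) * (2 * n + 1) ^ 2 ≤
      (5 * (3 + n ^ 2 + (n + 1) ^ 2 + 2 * (n ^ 2 + r) - (n ^ 2 + r) * u) - 6) * u := by
      push_cast at H2
      nlinarith
    exact_mod_cast h6
  rcases lt_trichotomy u 2 with h | h | h
  · interval_cases u <;> nlinarith
  · exact h
  · obtain ⟨p, rfl⟩ : ∃ p, u = p + 2 := ⟨u - 2, by ring⟩
    have hp : 1 ≤ p := by linarith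
    have c1 : p * (10 * (n ^ 2 + r) * p + 20 * r - 20 * n - 28) ≤ 46 := by nlinarith
    have c2 : 10 * (n ^ 2 + r) * 1 ≤ 10 * (n ^ 2 + r) * p :=
      mul_le_mul_of_nonneg_left hp (by linarith)
    have c3 : 47 ≤ 10 * (n ^ 2 + r) + 20 * r - 20 * n - 28 := by
      rcases eq_or_lt_of_le hn3 with h | h
      · subst h; linarith
      · nlinarith
    nlinarith only [c1, c2, c3, hp]

/-- The four coordinate equations expressing `α` as a sum of four squares have no solution. -/
lemma no_integer_solution (s n : ℤ) (hs : 11 ≤ s) (hn : n ^ 2 < s) (hn' : s < (n + 1) ^ 2)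
    (hn0 : 0 ≤ n) (a₀ a₁ b₀ b₁ : Fin 4 → ℤ)
    (h0 : ∑ i, (a₀ i ^ 2 + a₁ i ^ 2) + s * ∑ i, (b₀ i ^ 2 + b₁ i ^ 2)
      = 3 + n ^ 2 + (n + 1) ^ 2 + 2 * s)
    (h1 : ∑ i, (2 * a₀ i * a₁ i + a₁ i ^ 2) + s * ∑ i, (2 * b₀ i * b₁ i + b₁ i ^ 2) = 2)
    (h2 : ∑ i, (a₀ i * b₀ i + a₁ i * b₁ i) = 2 * n + 1)
    (h3 : ∑ i, (a₀ i * b₁ i + a₁ i * b₀ i + a₁ i * b₁ i) = 0) : False := by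
  obtain ⟨hu, hv⟩ := sum_b_sq_eq_two s n _ _ hs hn hn' hn0
    (fun t ht => cauchy_embedding t ht s n _ _ a₀ a₁ b₀ b₁ rfl rfl h0 h1 h2 h3)
    (Finset.sum_nonneg fun i _ => by positivity)
  rw [hu] at h0
  rw [hv] at h1
  simp only [Fin.sum_univ_four] at *
  -- `∑ b₁² = -2 ∑ b₀b₁` is even and at most `2`; if it were `2` then `b₀ = 0`, so it is `0`
  have hb1 : b₁ 0 ^ 2 + b₁ 1 ^ 2 + b₁ 2 ^ 2 + b₁ 3 ^ 2 = 0 := by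
    by_contra hne
    have e : b₁ 0 ^ 2 + b₁ 1 ^ 2 + b₁ 2 ^ 2 + b₁ 3 ^ 2
        = 2 * -(b₀ 0 * b₁ 0 + b₀ 1 * b₁ 1 + b₀ 2 * b₁ 2 + b₀ 3 * b₁ 3) := by linarith
    have g0 := sq_nonneg (b₀ 0)
    have g1 := sq_nonneg (b₀ 1)
    have g2 := sq_nonneg (b₀ 2)
    have g3 := sq_nonneg (b₀ 3)
    have k0 := sq_nonneg (b₁ 0)
    have k1 := sq_nonneg (b₁ 1)
    have k2 := sq_nonneg (b₁ 2)
    have k3 := sq_nonneg (b₁ 3)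
    have z0 : b₀ 0 = 0 := pow_eq_zero_iff (two_ne_zero) |>.1 (by omega : b₀ 0 ^ 2 = 0)
    have z1 : b₀ 1 = 0 := pow_eq_zero_iff (two_ne_zero) |>.1 (by omega : b₀ 1 ^ 2 = 0)
    have z2 : b₀ 2 = 0 := pow_eq_zero_iff (two_ne_zero) |>.1 (by omega : b₀ 2 ^ 2 = 0)
    have z3 : b₀ 3 = 0 := pow_eq_zero_iff (two_ne_zero) |>.1 (by omega : b₀ 3 ^ 2 = 0)
    rw [z0, z1, z2, z3] at e
    apply hne
    linarith
  have hz : b₁ 0 = 0 ∧ b₁ 1 = 0 ∧ b₁ 2 = 0 ∧ b₁ 3 = 0 := by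
    have k0 := sq_nonneg (b₁ 0)
    have k1 := sq_nonneg (b₁ 1)
    have k2 := sq_nonneg (b₁ 2)
    have k3 := sq_nonneg (b₁ 3)
    refine ⟨?_, ?_, ?_, ?_⟩ <;> apply (pow_eq_zero_iff two_ne_zero).1 <;> linarith
  obtain ⟨z0, z1, z2, z3⟩ := hz
  simp only [z0, z1, z2, z3] at *
  have hb : ∀ x : ℤ, x ^ 2 ≤ 2 → x = 0 ∨ x ^ 2 = 1 := by
    intro x hx
    have h1 : -1 ≤ x := by nlinarith
    have h2 : x ≤ 1 := by nlinarith
    interval_cases x <;> simp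
  have hne : ∀ x : ℤ, 0 ≤ x ^ 2 := sq_nonneg
  have c0 := hb (b₀ 0) (by linarith [hne (b₀ 1), hne (b₀ 2), hne (b₀ 3)])
  have c1 := hb (b₀ 1) (by linarith [hne (b₀ 0), hne (b₀ 2), hne (b₀ 3)])
  have c2 := hb (b₀ 2) (by linarith [hne (b₀ 0), hne (b₀ 1), hne (b₀ 3)])
  have c3 := hb (b₀ 3) (by linarith [hne (b₀ 0), hne (b₀ 1), hne (b₀ 2)])
  generalize b₀ 0 = d0 at *
  generalize b₀ 1 = d1 at *
  generalize b₀ 2 = d2 at *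
  generalize b₀ 3 = d3 at *
  rcases c0 with c0 | c0 <;> rcases c1 with c1 | c1 <;> rcases c2 with c2 | c2 <;>
    rcases c3 with c3 | c3 <;> simp only [c0, c1, c2, c3] at hu <;> try omega
  · exact no_two_units n d2 d3 (a₀ 2) (a₀ 3) (a₀ 0) (a₀ 1) (a₁ 2) (a₁ 3) (a₁ 0) (a₁ 1) c2 c3
      (by linarith) (by linarith) (by subst c0 c1; linarith) (by subst c0 c1; linarith)
  · exact no_two_units n d1 d3 (a₀ 1) (a₀ 3) (a₀ 0) (a₀ 2) (a₁ 1) (a₁ 3) (a₁ 0) (a₁ 2) c1 c3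
      (by linarith) (by linarith) (by subst c0 c2; linarith) (by subst c0 c2; linarith)
  · exact no_two_units n d1 d2 (a₀ 1) (a₀ 2) (a₀ 0) (a₀ 3) (a₁ 1) (a₁ 2) (a₁ 0) (a₁ 3) c1 c2
      (by linarith) (by linarith) (by subst c0 c3; linarith) (by subst c0 c3; linarith)
  · exact no_two_units n d0 d3 (a₀ 0) (a₀ 3) (a₀ 1) (a₀ 2) (a₁ 0) (a₁ 3) (a₁ 1) (a₁ 2) c0 c3
      (by linarith) (by linarith) (by subst c1 c2; linarith) (by subst c1 c2; linarith)
  · exact no_two_units n d0 d2 (a₀ 0) (a₀ 2) (a₀ 1) (a₀ 3) (a₁ 0) (a₁ 2) (a₁ 1) (a₁ 3) c0 c2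
      (by linarith) (by linarith) (by subst c1 c3; linarith) (by subst c1 c3; linarith)
  · exact no_two_units n d0 d1 (a₀ 0) (a₀ 1) (a₀ 2) (a₀ 3) (a₁ 0) (a₁ 1) (a₁ 2) (a₁ 3) c0 c1
      (by linarith) (by linarith) (by subst c2 c3; linarith) (by subst c2 c3; linarith)

/-! ### The field `ℚ(√5, √s)` and its ring of integers -/

lemma not_isSquare_of_squarefree {d : ℕ} (hd : Squarefree d) (h1 : 1 < d) : ¬ IsSquare d := by
  rintro ⟨r, rfl⟩
  have := Nat.isUnit_iff.1 (hd r dvd_rfl)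
  subst this
  omega

lemma rat_int_of_squarefree_mul_sq {d : ℕ} (hd : Squarefree d) {q : ℚ} {z : ℤ}
    (h : (d : ℚ) * q ^ 2 = z) : ∃ m : ℤ, q = m := by
  have hden : (q.den : ℚ) ≠ 0 := by exact_mod_cast q.den_nz
  have h2 : (d : ℤ) * q.num ^ 2 = z * (q.den : ℤ) ^ 2 := by
    have : (d : ℚ) * q.num ^ 2 = z * (q.den : ℚ) ^ 2 := by
      rw [← h]
      nth_rewrite 2 [← Rat.num_div_den q]
      field_simp
    exact_mod_cast this
  have hc : IsCoprime ((q.den : ℤ) ^ 2) (q.num ^ 2) := by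
    apply IsCoprime.pow
    rw [Int.isCoprime_iff_gcd_eq_one]
    simpa [Int.gcd] using q.reduced.symm
  have h3 : ((q.den : ℤ) ^ 2) ∣ d :=
    hc.dvd_of_dvd_mul_right (Dvd.intro_left z h2.symm)
  have h4 : q.den * q.den ∣ d := by
    rw [← pow_two]; exact_mod_cast h3
  have h5 : q.den = 1 := Nat.isUnit_iff.1 (hd _ h4)
  exact ⟨q.num, (Rat.den_eq_one_iff q).1 h5 |>.symm⟩

lemma isIntegral_of_eq {x y : ℝ} (h : IsIntegral ℤ x) (e : y = x) : IsIntegral ℤ y := e ▸ h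

lemma rat_int_of_isIntegral {q : ℚ} (h : IsIntegral ℤ (q : ℝ)) : ∃ z : ℤ, q = z := by
  have h' : IsIntegral ℤ q :=
    (isIntegral_algebraMap_iff (A := ℚ) (B := ℝ) (algebraMap ℚ ℝ).injective).1 (by simpa using h)
  obtain ⟨z, hz⟩ := IsIntegrallyClosed.isIntegral_iff.1 h'
  exact ⟨z, by simpa using hz.symm⟩

/-- The numbers `1, √5, √s, √5√s` are linearly independent over `ℚ`. -/
lemma biq_indep {s : ℕ} (hs : Squarefree s) (hs1 : 1 < s) (hnd : ¬ 5 ∣ s) {A B C D : ℚ}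
    (h : (A : ℝ) + B * √5 + C * √s + D * (√5 * √s) = 0) :
    A = 0 ∧ B = 0 ∧ C = 0 ∧ D = 0 := by
  have f2 : (√5 : ℝ) ^ 2 = 5 := Real.sq_sqrt (by norm_num)
  have g2 : (√s : ℝ) ^ 2 = s := Real.sq_sqrt (by positivity)
  have hsq5 : Squarefree 5 := Nat.prime_five.squarefree
  have hf : Irrational (√5 : ℝ) := by
    exact_mod_cast irrational_sqrt_natCast_iff.2 (not_isSquare_of_squarefree hsq5 (by norm_num))
  have hg : ¬ IsSquare s := not_isSquare_of_squarefree hs hs1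
  have hfg : ¬ IsSquare (5 * s) := not_isSquare_of_squarefree
    ((Nat.squarefree_mul (Nat.prime_five.coprime_iff_not_dvd.2 hnd)).2 ⟨hsq5, hs⟩) (by omega)
  have two : ∀ X Y : ℚ, (X : ℝ) + Y * √5 = 0 → X = 0 ∧ Y = 0 := by
    intro X Y hXY
    have hY : Y = 0 := by
      by_contra hY
      apply hf
      refine ⟨-X / Y, ?_⟩
      have : (Y : ℝ) ≠ 0 := by exact_mod_cast hY
      push_cast
      field_simp
      linarith
    subst hY
    simpa using hXY
  -- `√s ∉ ℚ(√5)`: squaring `√s = X + Y√5` gives `XY = 0`, so `s` or `5s` would be a square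
  have notin : ∀ X Y : ℚ, (√s : ℝ) ≠ X + Y * √5 := by
    intro X Y hXY
    have e : (((X ^ 2 + 5 * Y ^ 2 - s : ℚ)) : ℝ) + ((2 * X * Y : ℚ) : ℝ) * √5 = 0 := by
      push_cast
      rw [hXY] at g2
      linear_combination g2 - Y ^ 2 * f2
    obtain ⟨e1, e2⟩ := two _ _ e
    rcases mul_eq_zero.1 e2 with h0 | h0
    · have hX : X = 0 := by simpa using h0
      subst hX
      apply hfg
      rw [← Rat.isSquare_natCast_iff]
      exact ⟨5 * Y, by push_cast; linear_combination -5 * e1⟩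
    · subst h0
      apply hg
      rw [← Rat.isSquare_natCast_iff]
      exact ⟨X, by linear_combination -e1⟩
  by_cases hCD : C = 0 ∧ D = 0
  · obtain ⟨rfl, rfl⟩ := hCD
    obtain ⟨hA, hB⟩ := two A B (by simpa using h)
    exact ⟨hA, hB, rfl, rfl⟩
  · exfalso
    have hN : C ^ 2 - 5 * D ^ 2 ≠ 0 := by
      intro hN
      have hm : ((C : ℝ) + D * √5) * (C + (-D : ℚ) * √5) = 0 := by
        have : ((C ^ 2 - 5 * D ^ 2 : ℚ) : ℝ) = 0 := by exact_mod_cast hN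
        push_cast at this ⊢
        linear_combination this - D ^ 2 * f2
      rcases mul_eq_zero.1 hm with h0 | h0
      · exact hCD (two _ _ h0)
      · obtain ⟨h1, h2⟩ := two _ _ h0
        exact hCD ⟨h1, by simpa using h2⟩
    apply notin (-(A * C - 5 * B * D) / (C ^ 2 - 5 * D ^ 2)) (-(B * C - A * D) / (C ^ 2 - 5 * D ^ 2))
    have hN' : (C : ℝ) ^ 2 - 5 * D ^ 2 ≠ 0 := by exact_mod_cast hN
    push_cast
    field_simp
    linear_combination (C - D * √5) * h + (B * D + D ^ 2 * √s) * f2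

/-- The Galois conjugates `√5 ↦ e√5`, `√s ↦ h√s` (with signs `e, h = ±1`) of an integral element
are integral: evaluating a polynomial at the conjugate gives the conjugate of its value. -/
lemma isIntegral_conj {s : ℕ} (hs : Squarefree s) (hs1 : 1 < s) (hnd : ¬ 5 ∣ s) {a b c d : ℚ}
    (hx : IsIntegral ℤ ((a : ℝ) + b * √5 + c * √s + d * (√5 * √s))) (e h : ℝ) (he : e ^ 2 = 1)
    (hh : h ^ 2 = 1) :
    IsIntegral ℤ ((a : ℝ) + b * (e * √5) + c * (h * √s) + d * (e * √5 * (h * √s))) := by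
  have f2 : (√5 : ℝ) ^ 2 = 5 := Real.sq_sqrt (by norm_num)
  have g2 : (√s : ℝ) ^ 2 = s := Real.sq_sqrt (by positivity)
  have key : ∀ P : Polynomial ℤ, ∃ A B C D : ℚ,
      Polynomial.aeval ((a : ℝ) + b * √5 + c * √s + d * (√5 * √s)) P
        = (A : ℝ) + B * √5 + C * √s + D * (√5 * √s) ∧
      Polynomial.aeval ((a : ℝ) + b * (e * √5) + c * (h * √s) + d * (e * √5 * (h * √s))) P
        = (A : ℝ) + B * (e * √5) + C * (h * √s) + D * (e * √5 * (h * √s)) := by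
    intro P
    induction P using Polynomial.induction_on' with
    | add p q hp hq =>
      obtain ⟨A, B, C, D, h1, h2⟩ := hp
      obtain ⟨A', B', C', D', h1', h2'⟩ := hq
      refine ⟨A + A', B + B', C + C', D + D', ?_, ?_⟩
      · rw [map_add, h1, h1']; push_cast; ring
      · rw [map_add, h2, h2']; push_cast; ring
    | monomial n z =>
      induction n with
      | zero => exact ⟨z, 0, 0, 0, by simp, by simp⟩
      | succ n ih =>
        obtain ⟨A, B, C, D, h1, h2⟩ := ih
        refine ⟨A * a + 5 * B * b + s * C * c + 5 * s * D * d,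
          A * b + B * a + s * C * d + s * D * c,
          A * c + C * a + 5 * B * d + 5 * D * b,
          A * d + D * a + B * c + C * b, ?_, ?_⟩
        · rw [← Polynomial.monomial_mul_X, map_mul, h1, Polynomial.aeval_X]
          push_cast
          generalize (√5 : ℝ) = f at *
          generalize (√s : ℝ) = g at *
          rw [← g2, ← f2]
          ring
        · rw [← Polynomial.monomial_mul_X, map_mul, h2, Polynomial.aeval_X]
          push_cast
          have F2 : (e * √5) ^ 2 = 5 := by rw [mul_pow, he, f2, one_mul]
          have G2 : (h * √s) ^ 2 = s := by rw [mul_pow, hh, g2, one_mul]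
          generalize e * √5 = f at *
          generalize h * √s = g at *
          rw [← G2, ← F2]
          ring
  obtain ⟨P, hP, hev⟩ := hx
  obtain ⟨A, B, C, D, h1, h2⟩ := key P
  rw [← Polynomial.aeval_def, h1] at hev
  obtain ⟨rfl, rfl, rfl, rfl⟩ := biq_indep hs hs1 hnd hev
  exact ⟨P, hP, by rw [← Polynomial.aeval_def, h2]; simp⟩

lemma mem_biqField {s : ℕ} {x : ℝ} (hx : x ∈ biqField 5 s) :
    ∃ a b c d : ℚ, x = (a : ℝ) + b * √5 + c * √s + d * (√5 * √s) := by
  have f2 : (√5 : ℝ) ^ 2 = 5 := Real.sq_sqrt (by norm_num)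
  have g2 : (√s : ℝ) ^ 2 = s := Real.sq_sqrt (by positivity)
  have halg : ∀ y ∈ ({Real.sqrt (5 : ℕ), Real.sqrt s} : Set ℝ), IsAlgebraic ℚ y := by
    have hn : ∀ m : ℕ, IsAlgebraic ℚ (√m : ℝ) := fun m => by
      have : IsIntegral ℚ ((√m : ℝ) ^ 2) := by
        rw [Real.sq_sqrt (by positivity)]; exact isIntegral_natCast _
      exact (IsIntegral.of_pow two_pos this).isAlgebraic
    rintro y (rfl | rfl)
    · exact hn 5
    · exact hn s
  have hx' : x ∈ Algebra.adjoin ℚ ({Real.sqrt (5 : ℕ), Real.sqrt s} : Set ℝ) := by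
    rw [← IntermediateField.adjoin_toSubalgebra_of_isAlgebraic halg]
    exact hx
  clear hx
  induction hx' using Algebra.adjoin_induction with
  | mem y hy =>
    rcases hy with rfl | rfl
    · exact ⟨0, 1, 0, 0, by simp⟩
    · exact ⟨0, 0, 1, 0, by simp⟩
  | algebraMap r => exact ⟨r, 0, 0, 0, by simp⟩
  | add y z _ _ hy hz =>
    obtain ⟨a, b, c, d, rfl⟩ := hy
    obtain ⟨a', b', c', d', rfl⟩ := hz
    exact ⟨a + a', b + b', c + c', d + d', by push_cast; ring⟩
  | mul y z _ _ hy hz =>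
    obtain ⟨A, B, C, D, rfl⟩ := hy
    obtain ⟨a, b, c, d, rfl⟩ := hz
    refine ⟨A * a + 5 * B * b + s * C * c + 5 * s * D * d,
      A * b + B * a + s * C * d + s * D * c,
      A * c + C * a + 5 * B * d + 5 * D * b,
      A * d + D * a + B * c + C * b, ?_⟩
    push_cast
    generalize (√5 : ℝ) = f at *
    generalize (√s : ℝ) = g at *
    rw [← g2, ← f2]
    ring

/-- The integers of `ℚ(√5)` lie in `ℤ[φ]`: `x + y√5 = m + kφ` in coordinates. -/
lemma integers_sqrt5 {x y : ℚ} (h1 : IsIntegral ℤ ((x : ℝ) + y * √5))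
    (h2 : IsIntegral ℤ ((x : ℝ) - y * √5)) : ∃ m k : ℤ, x = m + k / 2 ∧ y = k / 2 := by
  have f2 : (√5 : ℝ) ^ 2 = 5 := Real.sq_sqrt (by norm_num)
  obtain ⟨X, hX⟩ := rat_int_of_isIntegral (q := 2 * x) (by
    refine isIntegral_of_eq (h1.add h2) ?_; push_cast; ring)
  obtain ⟨N, hN⟩ := rat_int_of_isIntegral (q := x ^ 2 - 5 * y ^ 2) (by
    refine isIntegral_of_eq (h1.mul h2) ?_; push_cast; linear_combination y ^ 2 * f2)
  obtain ⟨Y, hY⟩ := rat_int_of_squarefree_mul_sq Nat.prime_five.squarefree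
    (q := 2 * y) (z := X ^ 2 - 4 * N) (by
      push_cast; rw [← hX, ← hN]; ring)
  have e : X ^ 2 - 5 * Y ^ 2 = 4 * N := by
    have : (X : ℚ) ^ 2 - 5 * Y ^ 2 = 4 * N := by rw [← hX, ← hN, ← hY]; ring
    exact_mod_cast this
  have hpar : X % 2 = Y % 2 := by
    have h : (X ^ 2 - 5 * Y ^ 2) % 2 = 0 := by omega
    rcases Int.emod_two_eq_zero_or_one X with h1 | h1 <;>
      rcases Int.emod_two_eq_zero_or_one Y with h2 | h2 <;>
      simp [pow_two, Int.sub_emod, Int.mul_emod, h1, h2] at h ⊢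
  obtain ⟨m, hm⟩ : ∃ m, X = Y + 2 * m := ⟨(X - Y) / 2, by omega⟩
  refine ⟨m, Y, ?_, by linarith⟩
  have : (X : ℚ) = Y + 2 * m := by exact_mod_cast hm
  linarith

lemma mod_four_aux : ∀ s m₁ k₁ m₂ k₂ : ZMod 4, s = 2 ∨ s = 3 →
    m₁ ^ 2 + k₁ ^ 2 - s * (m₂ ^ 2 + k₂ ^ 2) = 0 →
    2 * m₁ * k₁ + k₁ ^ 2 - s * (2 * m₂ * k₂ + k₂ ^ 2) = 0 →
    2 * m₁ = 0 ∧ 2 * k₁ = 0 ∧ 2 * m₂ = 0 ∧ 2 * k₂ = 0 := by decide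

/-- If `U² ≡ sV² (mod 4)` in `ℤ[φ]` and `s ≡ 2, 3 (mod 4)`, then `U` and `V` are divisible by `2`. -/
lemma even_of_mod_four {s m₁ k₁ m₂ k₂ m₃ k₃ : ℤ} (hs : s % 4 = 2 ∨ s % 4 = 3)
    (h1 : m₁ ^ 2 + k₁ ^ 2 - s * (m₂ ^ 2 + k₂ ^ 2) = 4 * m₃)
    (h2 : 2 * m₁ * k₁ + k₁ ^ 2 - s * (2 * m₂ * k₂ + k₂ ^ 2) = 4 * k₃) :
    2 ∣ m₁ ∧ 2 ∣ k₁ ∧ 2 ∣ m₂ ∧ 2 ∣ k₂ := by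
  have h4 : (4 : ZMod 4) = 0 := rfl
  have hs' : (s : ZMod 4) = 2 ∨ (s : ZMod 4) = 3 := by
    rcases hs with h | h
    · left
      have := (ZMod.intCast_eq_intCast_iff s 2 4).2 h
      simpa using this
    · right
      have := (ZMod.intCast_eq_intCast_iff s 3 4).2 h
      simpa using this
  have g1 := congrArg (Int.cast : ℤ → ZMod 4) h1
  have g2 := congrArg (Int.cast : ℤ → ZMod 4) h2
  push_cast at g1 g2
  rw [h4, zero_mul] at g1 g2
  have tr : ∀ z : ℤ, 2 * (z : ZMod 4) = 0 → 2 ∣ z := by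
    intro z hz
    have : ((2 * z : ℤ) : ZMod 4) = 0 := by push_cast; exact hz
    have := (ZMod.intCast_zmod_eq_zero_iff_dvd (2 * z) 4).1 this
    push_cast at this
    omega
  obtain ⟨a, b, c, d⟩ := mod_four_aux _ _ _ _ _ hs' g1 g2
  exact ⟨tr _ a, tr _ b, tr _ c, tr _ d⟩

/-- `1, φ, √s, φ√s` generate the ring of integers of `ℚ(√5, √s)` when `s ≢ 1 (mod 4)`, `5 ∤ s`. -/
lemma mem_ringOfInt {s : ℕ} (hs : Squarefree s) (hs1 : 1 < s) (hs4 : s % 4 ≠ 1) (hnd : ¬ 5 ∣ s)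
    {x : ℝ} (hx : x ∈ ringOfInt (biqField 5 s)) :
    ∃ a₀ a₁ b₀ b₁ : ℤ, x = (a₀ + a₁ * ((1 + √5) / 2)) + (b₀ + b₁ * ((1 + √5) / 2)) * √s := by
  have f2 : (√5 : ℝ) ^ 2 = 5 := Real.sq_sqrt (by norm_num)
  have g2 : (√s : ℝ) ^ 2 = s := Real.sq_sqrt (by positivity)
  obtain ⟨hxK, hxi⟩ := hx
  obtain ⟨a, b, c, d, rfl⟩ := mem_biqField hxK
  have hs4' : s % 4 = 2 ∨ s % 4 = 3 := by
    have : s % 4 ≠ 0 := fun h => by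
      have := Nat.isUnit_iff.1 (hs 2 (by omega))
      omega
    omega
  have c1 := isIntegral_conj hs hs1 hnd hxi 1 (-1) (by norm_num) (by norm_num)
  have c2 := isIntegral_conj hs hs1 hnd hxi (-1) 1 (by norm_num) (by norm_num)
  have c3 := isIntegral_conj hs hs1 hnd hxi (-1) (-1) (by norm_num) (by norm_num)
  obtain ⟨m₁, k₁, hm₁, hk₁⟩ := integers_sqrt5 (x := 2 * a) (y := 2 * b)
    (by refine isIntegral_of_eq (hxi.add c1) ?_; push_cast; ring)
    (by refine isIntegral_of_eq (c2.add c3) ?_; push_cast; ring)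
  obtain ⟨m₃, k₃, hm₃, hk₃⟩ := integers_sqrt5 (x := a ^ 2 + 5 * b ^ 2 - s * (c ^ 2 + 5 * d ^ 2))
    (y := 2 * a * b - 2 * s * c * d)
    (by
      refine isIntegral_of_eq (hxi.mul c1) ?_
      push_cast
      generalize (√5 : ℝ) = f at *
      generalize (√s : ℝ) = g at *
      rw [← g2, ← f2]
      ring)
    (by
      refine isIntegral_of_eq (c2.mul c3) ?_
      push_cast
      generalize (√5 : ℝ) = f at *
      generalize (√s : ℝ) = g at *
      rw [← g2, ← f2]
      ring)
  -- `w1` and `w2` state integrality of `2(c + d√5)√s` and of its conjugate `2(c - d√5)√s`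
  have w1 := hxi.sub c1
  have w2 := c2.sub c3
  obtain ⟨M, hM⟩ := rat_int_of_isIntegral (q := s * (4 * c) ^ 2) (by
    refine isIntegral_of_eq ((w1.add w2).pow 2) ?_; push_cast; linear_combination (-16 * c ^ 2) * g2)
  obtain ⟨X, hX⟩ := rat_int_of_squarefree_mul_sq hs hM
  obtain ⟨M', hM'⟩ := rat_int_of_isIntegral (q := ((5 * s : ℕ) : ℚ) * (4 * d) ^ 2) (by
    refine isIntegral_of_eq ((w1.sub w2).pow 2) ?_
    push_cast
    generalize (√5 : ℝ) = f at *
    generalize (√s : ℝ) = g at *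
    rw [← g2, ← f2]
    ring)
  obtain ⟨Y, hY⟩ := rat_int_of_squarefree_mul_sq
    ((Nat.squarefree_mul (Nat.prime_five.coprime_iff_not_dvd.2 hnd)).2
      ⟨Nat.prime_five.squarefree, hs⟩) hM'
  obtain ⟨N, hN⟩ := rat_int_of_isIntegral (q := s * (4 * c ^ 2 - 20 * d ^ 2)) (by
    refine isIntegral_of_eq (w1.mul w2) ?_
    push_cast
    generalize (√5 : ℝ) = f at *
    generalize (√s : ℝ) = g at *
    rw [← g2]
    linear_combination (4 * d ^ 2 * g ^ 2) * f2)
  have e : (s : ℤ) * (X ^ 2 - 5 * Y ^ 2) = 4 * N := by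
    have : (s : ℚ) * (X ^ 2 - 5 * Y ^ 2) = 4 * N := by rw [← hX, ← hN, ← hY]; ring
    exact_mod_cast this
  have hpar : X % 2 = Y % 2 := by
    have h : (X ^ 2 - 5 * Y ^ 2) % 2 = 0 := by
      by_contra h
      have h1 : (s : ℤ) * (X ^ 2 - 5 * Y ^ 2) % 4 = 0 := by omega
      have h3 : (X ^ 2 - 5 * Y ^ 2) % 4 = 1 ∨ (X ^ 2 - 5 * Y ^ 2) % 4 = 3 := by omega
      have h2 : (s : ℤ) % 4 = 2 ∨ (s : ℤ) % 4 = 3 := by omega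
      rw [Int.mul_emod] at h1
      rcases h3 with h3 | h3 <;> rcases h2 with h2 | h2 <;> rw [h2, h3] at h1 <;> norm_num at h1
    rcases Int.emod_two_eq_zero_or_one X with h1 | h1 <;>
      rcases Int.emod_two_eq_zero_or_one Y with h2 | h2 <;>
      simp [pow_two, Int.sub_emod, Int.mul_emod, h1, h2] at h ⊢
  obtain ⟨m₂, hm₂⟩ : ∃ m, X = Y + 2 * m := ⟨(X - Y) / 2, by omega⟩
  have hm₂' : (X : ℚ) = Y + 2 * m₂ := by exact_mod_cast hm₂
  have ea : a = m₁ / 2 + k₁ / 4 := by linarith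
  have eb : b = k₁ / 4 := by linarith
  have ec : c = m₂ / 2 + Y / 4 := by linarith
  have ed : d = Y / 4 := by linarith
  have E1 : m₁ ^ 2 + k₁ ^ 2 - s * (m₂ ^ 2 + Y ^ 2) = 4 * m₃ := by
    have : (m₁ : ℚ) ^ 2 + k₁ ^ 2 - s * (m₂ ^ 2 + Y ^ 2) = 4 * m₃ := by
      rw [ea, eb, ec, ed] at hm₃ hk₃
      linear_combination 4 * hm₃ - 4 * hk₃
    exact_mod_cast this
  have E2 : 2 * m₁ * k₁ + k₁ ^ 2 - s * (2 * m₂ * Y + Y ^ 2) = 4 * k₃ := by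
    have : 2 * (m₁ : ℚ) * k₁ + k₁ ^ 2 - s * (2 * m₂ * Y + Y ^ 2) = 4 * k₃ := by
      rw [ea, eb, ec, ed] at hk₃
      linear_combination 8 * hk₃
    exact_mod_cast this
  obtain ⟨⟨a₀, rfl⟩, ⟨a₁, rfl⟩, ⟨b₀, rfl⟩, ⟨b₁, rfl⟩⟩ := even_of_mod_four (by omega) E1 E2
  refine ⟨a₀, a₁, b₀, b₁, ?_⟩
  rw [ea, eb, ec, ed]
  push_cast
  ring

/-! ### The element of length five -/

/-- Let `s > 7` be squarefree with `s ≢ 1 (mod 4)` and `5 ∤ s`, and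
`K = ℚ(√5, √s)`. Then `1² + ((1+√5)/2)² + ((1+√5)/2)² + (⌊√s⌋+√s)² + (⌈√s⌉+√s)²` is a
sum of `5` squares in `O_K` but not of `4`; in particular `P(O_K) ≥ 5`. -/
theorem length_five_element_sqrt5_s_not_one_mod_four
    (s : ℕ) (hs : Squarefree s) (hs7 : 7 < s) (hs4 : s % 4 ≠ 1) (hnd : ¬ (5 ∣ s)) :
    SumOfNSquaresIn (ringOfInt (biqField 5 s)) 5
      (1 ^ 2 + ((1 + Real.sqrt 5) / 2) ^ 2 + ((1 + Real.sqrt 5) / 2) ^ 2 +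
        ((⌊Real.sqrt s⌋ : ℝ) + Real.sqrt s) ^ 2 +
        ((⌈Real.sqrt s⌉ : ℝ) + Real.sqrt s) ^ 2) ∧
    ¬ SumOfNSquaresIn (ringOfInt (biqField 5 s)) 4
      (1 ^ 2 + ((1 + Real.sqrt 5) / 2) ^ 2 + ((1 + Real.sqrt 5) / 2) ^ 2 +
        ((⌊Real.sqrt s⌋ : ℝ) + Real.sqrt s) ^ 2 +
        ((⌈Real.sqrt s⌉ : ℝ) + Real.sqrt s) ^ 2) := by
  have f2 : (√5 : ℝ) ^ 2 = 5 := Real.sq_sqrt (by norm_num)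
  have g2 : (√s : ℝ) ^ 2 = s := Real.sq_sqrt (by positivity)
  have hs1 : 1 < s := by omega
  constructor
  · have hg : (√s : ℝ) ∈ biqField 5 s :=
      IntermediateField.subset_adjoin _ _ (by simp)
    have hf : (√5 : ℝ) ∈ biqField 5 s :=
      IntermediateField.subset_adjoin _ _ (by simp)
    have hgi : IsIntegral ℤ (√s : ℝ) := by
      have : IsIntegral ℤ ((√s : ℝ) ^ 2) := by rw [g2]; exact isIntegral_natCast _
      exact IsIntegral.of_pow two_pos this
    have hφi : IsIntegral ℤ ((1 + √5) / 2 : ℝ) := by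
      refine ⟨Polynomial.X ^ 2 - Polynomial.X - 1, by monicity!, ?_⟩
      simp only [Polynomial.eval₂_sub, Polynomial.eval₂_pow, Polynomial.eval₂_X,
        Polynomial.eval₂_one]
      linear_combination f2 / 4
    have hφ : (1 + √5) / 2 ∈ ringOfInt (biqField 5 s) :=
      ⟨div_mem (add_mem (one_mem _) hf) (ofNat_mem _ 2), hφi⟩
    have hz : ∀ z : ℤ, (z : ℝ) + √s ∈ ringOfInt (biqField 5 s) := fun z =>
      ⟨add_mem (intCast_mem _ z) hg, (isIntegral_intCast z).add hgi⟩
    refine ⟨![1, (1 + √5) / 2, (1 + √5) / 2, ⌊√(s : ℝ)⌋ + √s, ⌈√(s : ℝ)⌉ + √s], ?_, ?_⟩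
    · intro i
      fin_cases i
      · exact ⟨one_mem _, isIntegral_one⟩
      · exact hφ
      · exact hφ
      · exact hz _
      · exact hz _
    · simp [Fin.sum_univ_five]
  · rintro ⟨x, hx, hsum⟩
    have hs11 : 11 ≤ s := by
      by_contra hlt
      have h8 : s ≠ 8 := by
        rintro rfl; exact absurd (Nat.isUnit_iff.1 (hs 2 (by norm_num))) (by norm_num)
      have h9 : s ≠ 9 := by
        rintro rfl; exact absurd (Nat.isUnit_iff.1 (hs 3 (by norm_num))) (by norm_num)
      omega
    choose a₀ a₁ b₀ b₁ hrep using fun i => mem_ringOfInt hs hs1 hs4 hnd (hx i)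
    have hirr : Irrational (√s : ℝ) :=
      irrational_sqrt_natCast_iff.2 (not_isSquare_of_squarefree hs hs1)
    have hlt : (⌊(√s : ℝ)⌋ : ℝ) < √s := lt_of_le_of_ne (Int.floor_le _) (hirr.ne_int _).symm
    have hlt' : (√s : ℝ) < ⌊(√s : ℝ)⌋ + 1 := Int.lt_floor_add_one _
    have hceil : ⌈(√s : ℝ)⌉ = ⌊(√s : ℝ)⌋ + 1 := by
      rw [Int.ceil_eq_iff]; push_cast; exact ⟨by linarith, hlt'.le⟩
    have hn0 : 0 ≤ ⌊(√s : ℝ)⌋ := Int.floor_nonneg.2 (Real.sqrt_nonneg _)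
    rw [hceil] at hsum
    generalize ⌊(√s : ℝ)⌋ = n at *
    have hn0' : (0 : ℝ) ≤ n := by exact_mod_cast hn0
    have hn : n ^ 2 < (s : ℤ) := by
      have : (n : ℝ) ^ 2 < s := by rw [← g2]; exact pow_lt_pow_left₀ hlt hn0' two_ne_zero
      exact_mod_cast this
    have hn' : (s : ℤ) < (n + 1) ^ 2 := by
      have : (s : ℝ) < (n + 1) ^ 2 := by
        rw [← g2]; exact pow_lt_pow_left₀ hlt' (Real.sqrt_nonneg _) two_ne_zero
      exact_mod_cast this
    -- coordinates of `∑ xᵢ² - α` in the basis `1, φ, √s, φ√s`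
    obtain ⟨E0, hE0⟩ : ∃ E : ℤ, E = ∑ i, (a₀ i ^ 2 + a₁ i ^ 2) + s * ∑ i, (b₀ i ^ 2 + b₁ i ^ 2)
      - (3 + n ^ 2 + (n + 1) ^ 2 + 2 * s) := ⟨_, rfl⟩
    obtain ⟨E1, hE1⟩ : ∃ E : ℤ, E = ∑ i, (2 * a₀ i * a₁ i + a₁ i ^ 2)
      + s * ∑ i, (2 * b₀ i * b₁ i + b₁ i ^ 2) - 2 := ⟨_, rfl⟩
    obtain ⟨E2, hE2⟩ : ∃ E : ℤ, E = ∑ i, (a₀ i * b₀ i + a₁ i * b₁ i) - (2 * n + 1) := ⟨_, rfl⟩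
    obtain ⟨E3, hE3⟩ : ∃ E : ℤ, E = ∑ i, (a₀ i * b₁ i + a₁ i * b₀ i + a₁ i * b₁ i) := ⟨_, rfl⟩
    have hlin : (((E0 + E1 / 2 : ℚ)) : ℝ) + ((E1 / 2 : ℚ) : ℝ) * √5
        + ((2 * E2 + E3 : ℚ) : ℝ) * √s + ((E3 : ℚ) : ℝ) * (√5 * √s) = 0 := by
      have r0 := congrArg (Int.cast : ℤ → ℝ) hE0
      have r1 := congrArg (Int.cast : ℤ → ℝ) hE1
      have r2 := congrArg (Int.cast : ℤ → ℝ) hE2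
      have r3 := congrArg (Int.cast : ℤ → ℝ) hE3
      simp only [Fin.sum_univ_four, hrep] at hsum r0 r1 r2 r3
      push_cast at hsum r0 r1 r2 r3 ⊢
      obtain ⟨t, ht⟩ : ∃ t : ℝ, t = (1 + √5) / 2 := ⟨_, rfl⟩
      have ht2 : t ^ 2 = t + 1 := by rw [ht]; linear_combination f2 / 4
      have h5 : (√5 : ℝ) = 2 * t - 1 := by rw [ht]; ring
      rw [← ht] at hsum
      rw [h5]
      generalize (√s : ℝ) = g at *
      rw [← g2] at r0 r1
      linear_combination -hsum + r0 + t * r1 + 2 * g * r2 + 2 * t * g * r3 + ((2 : ℝ)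
        - (a₁ 0 + b₁ 0 * g) ^ 2 - (a₁ 1 + b₁ 1 * g) ^ 2 - (a₁ 2 + b₁ 2 * g) ^ 2
        - (a₁ 3 + b₁ 3 * g) ^ 2) * ht2
    obtain ⟨k0, k1, k2, k3⟩ := biq_indep hs hs1 hnd hlin
    have z3 : E3 = 0 := by exact_mod_cast k3
    have z2 : E2 = 0 := by
      have : (E2 : ℚ) = 0 := by linarith
      exact_mod_cast this
    have z1 : E1 = 0 := by
      have : (E1 : ℚ) = 0 := by linarith
      exact_mod_cast this
    have z0 : E0 = 0 := by
      have : (E0 : ℚ) = 0 := by linarith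
      exact_mod_cast this
    exact no_integer_solution s n (by exact_mod_cast hs11) hn hn' hn0 a₀ a₁ b₀ b₁
      (by linarith) (by linarith) (by linarith) (by linarith)
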